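/- Let E, D : [0, ∞) → ℝ with E nonnegative and D nonnegative and locally integrable, let c₁ᴱ, c₂ᴱ, c, c_T > 0 and T > 4c. Assume: (i) for all 0 ≤ t₁ < t₂ one has −c₁ᴱ ∫_{t₁}^{t₂} D(t) dt ≥ E(t₂) − E(t₁) ≥ −c₂ᴱ ∫_{t₁}^{t₂} D(t) dt; (ii) ∫_0^T E(t) dt ≤ c (E(0) + E(T)) + c_T ∫_0^T D(t) dt. Then, setting c̃ := (c_T + c c₂ᴱ)/c₁ᴱ, one has (T/2 + c̃) E(T) ≤ c̃ E(0); in particular E(T) ≤ γ E(0) with γ := c̃/(c̃ + T/2) < 1. -/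

import Mathlib

open MeasureTheory

/-!
Since `E` is nonincreasing, `T * E T ≤ ∫ E` over `[0, T]`, so the observability inequality bounds
`(T - 2 * c) * E T` by `c * (E 0 - E T)` plus a multiple of the total dissipation. The lower
bound on `E T - E 0` turns the first term into dissipation as well, and the upper bound turns all
of the dissipation back into the energy loss `E 0 - E T`, whose `E T` is absorbed on the left.
-/

open Set

theorem sub_mul_le_integral_of_antitoneOn {f : ℝ → ℝ} {a b : ℝ} (hab : a ≤ b)
    (hf : AntitoneOn f (Icc a b)) : (b - a) * f b ≤ ∫ x in a..b, f x := by
  have hf_int : IntervalIntegrable f volume a b :=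
    AntitoneOn.intervalIntegrable (by rwa [uIcc_of_le hab])
  calc (b - a) * f b = ∫ _ in a..b, f b := by
        rw [intervalIntegral.integral_const, smul_eq_mul]
    _ ≤ ∫ x in a..b, f x :=
        intervalIntegral.integral_mono_on hab intervalIntegrable_const hf_int
          fun _ hx => hf hx (right_mem_Icc.2 hab) hx.2

theorem antitoneOn_Ici_of_sub_le_neg_mul_integral {E D : ℝ → ℝ} {a k : ℝ} (hk : 0 ≤ k)
    (hD : ∀ t, a ≤ t → 0 ≤ D t)
    (hdecay : ∀ t₁ t₂, a ≤ t₁ → t₁ < t₂ → E t₂ - E t₁ ≤ -k * ∫ t in t₁..t₂, D t) :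
    AntitoneOn E (Ici a) := by
  intro t₁ (ht₁ : a ≤ t₁) t₂ _ ht
  obtain rfl | hlt := ht.eq_or_lt
  · exact le_rfl
  have hdiss : 0 ≤ k * ∫ t in t₁..t₂, D t :=
    mul_nonneg hk <| intervalIntegral.integral_nonneg ht fun t h => hD t (ht₁.trans h.1)
  linarith [hdecay t₁ t₂ ht₁ hlt]

theorem sub_two_mul_mul_le_of_observability {e₀ e δ T c₁ c₂ c cT : ℝ}
    (hc₁ : 0 < c₁) (hc : 0 ≤ c) (hκ : 0 ≤ cT + c * c₂)
    (hloss_ge : c₁ * δ ≤ e₀ - e) (hloss_le : e₀ - e ≤ c₂ * δ)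
    (hobs : T * e ≤ c * (e₀ + e) + cT * δ) :
    (T - 2 * c) * e ≤ (cT + c * c₂) / c₁ * (e₀ - e) :=
  calc (T - 2 * c) * e ≤ c * (e₀ - e) + cT * δ := by linarith
    _ ≤ c * (c₂ * δ) + cT * δ := by gcongr
    _ = (cT + c * c₂) / c₁ * (c₁ * δ) := by field_simp; ring
    _ ≤ (cT + c * c₂) / c₁ * (e₀ - e) := by gcongr

/-- `δ` stands for the total dissipation over `[0, T]`. The best admissible margin is
`ρ = T - 2 * c`; a smaller one, such as `ρ = T / 2` when `4 * c < T`, gives a weaker rate. -/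
theorem energy_contraction_after_one_period_general {E : ℝ → ℝ} {δ c₁ c₂ c cT T ρ : ℝ}
    (hE : AntitoneOn E (Icc 0 T)) (hET : 0 ≤ E T)
    (hc₁ : 0 < c₁) (hc : 0 ≤ c) (hκ : 0 ≤ cT + c * c₂) (hρ : 0 < ρ) (hρT : ρ ≤ T - 2 * c)
    (hloss_ge : c₁ * δ ≤ E 0 - E T) (hloss_le : E 0 - E T ≤ c₂ * δ)
    (hobs : (∫ t in (0 : ℝ)..T, E t) ≤ c * (E 0 + E T) + cT * δ) :
    (ρ + (cT + c * c₂) / c₁) * E T ≤ (cT + c * c₂) / c₁ * E 0 ∧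
    E T ≤ (cT + c * c₂) / c₁ / ((cT + c * c₂) / c₁ + ρ) * E 0 ∧
    (cT + c * c₂) / c₁ / ((cT + c * c₂) / c₁ + ρ) < 1 := by
  have hmean : T * E T ≤ ∫ t in (0 : ℝ)..T, E t := by
    simpa only [sub_zero] using sub_mul_le_integral_of_antitoneOn (by linarith) hE
  have hsharp : (T - 2 * c) * E T ≤ (cT + c * c₂) / c₁ * (E 0 - E T) :=
    sub_two_mul_mul_le_of_observability hc₁ hc hκ hloss_ge hloss_le (hmean.trans hobs)
  have hκ' : 0 ≤ (cT + c * c₂) / c₁ := div_nonneg hκ hc₁.le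
  generalize (cT + c * c₂) / c₁ = κ at hsharp hκ' ⊢
  have hmargin : ρ * E T ≤ κ * (E 0 - E T) :=
    (mul_le_mul_of_nonneg_right hρT hET).trans hsharp
  have hcontr : (ρ + κ) * E T ≤ κ * E 0 := by linarith
  refine ⟨hcontr, ?_, ?_⟩
  · rw [div_mul_eq_mul_div, le_div_iff₀ (by positivity)]
    linarith
  · rw [div_lt_one (by positivity)]
    linarith

/-- Intermediate step (inequalities (A.8)–(A.11)): for a window length `T > 4c`,
the energy at time `T` is a fixed fraction `γ < 1` of the initial energy. -/
theorem energy_contraction_after_one_period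
    (E D : ℝ → ℝ)
    (hE_nonneg : ∀ t, 0 ≤ t → 0 ≤ E t)
    (hD_nonneg : ∀ t, 0 ≤ D t)
    (hD_loc : LocallyIntegrableOn D (Set.Ici (0 : ℝ)))
    (c₁E c₂E c cT T : ℝ)
    (hc₁E : 0 < c₁E) (hc₂E : 0 < c₂E) (hc : 0 < c) (hcT : 0 < cT) (hT : 4 * c < T)
    (hdecay : ∀ t₁ t₂ : ℝ, 0 ≤ t₁ → t₁ < t₂ →
      E t₂ - E t₁ ≤ -c₁E * ∫ t in t₁..t₂, D t ∧
      -c₂E * ∫ t in t₁..t₂, D t ≤ E t₂ - E t₁)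
    (hobs : (∫ t in (0 : ℝ)..T, E t) ≤ c * (E 0 + E T) + cT * ∫ t in (0 : ℝ)..T, D t) :
    (T / 2 + (cT + c * c₂E) / c₁E) * E T ≤ ((cT + c * c₂E) / c₁E) * E 0 ∧
    E T ≤ (((cT + c * c₂E) / c₁E) / ((cT + c * c₂E) / c₁E + T / 2)) * E 0 ∧
    ((cT + c * c₂E) / c₁E) / ((cT + c * c₂E) / c₁E + T / 2) < 1 := by
  have hT_pos : 0 < T := by linarith
  have hE_anti : AntitoneOn E (Ici 0) :=
    antitoneOn_Ici_of_sub_le_neg_mul_integral hc₁E.le (fun t _ => hD_nonneg t)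
      fun t₁ t₂ ht₁ ht => (hdecay t₁ t₂ ht₁ ht).1
  obtain ⟨hupper, hlower⟩ := hdecay 0 T le_rfl hT_pos
  exact energy_contraction_after_one_period_general (hE_anti.mono Icc_subset_Ici_self)
    (hE_nonneg T hT_pos.le) hc₁E hc.le (by positivity) (half_pos hT_pos) (by linarith)
    (by linarith) (by linarith) hobs
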